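/- Let n ≥ 2 and let ι be an admissible sequence adapted to the Cartan matrix of the given type. (i) In type B_n: the set of elements of the form S_{l_p}⋯S_{l_1} x_{r,n} (p ≥ 0, r, l_1,…,l_p ≥ 1) equals the set of tableaux [j_1,…,j_n]^B_s in Tab_{B,ι} with n rows and all entries in J_B. (ii) In type C_n: the set of elements of the form S_{l_p}⋯S_{l_1} x_{r,n} (p ≥ 0, r, l_1,…,l_p ≥ 1) equals the set of tableaux [j_1,…,j_t]^C_s in Tab_{C,ι} whose first entry is j_1 = ovl(n+1). -/

import Mathlib

noncomputable section

/-- The coordinate linear form `x_k` (as a coefficient vector). -/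
def xc (k : ℕ) : ℕ → ℚ := fun l => if l = k then 1 else 0

/-- Cartan matrix of type `A_n`. -/
def cartanA (_n : ℕ) (i j : ℕ) : ℤ :=
  if i = j then 2 else if i + 1 = j ∨ j + 1 = i then -1 else 0

/-- Cartan matrix of type `B_n`. -/
def cartanB (n : ℕ) (i j : ℕ) : ℤ :=
  if i = j then 2
  else if i = n ∧ j = n - 1 then -2
  else if i + 1 = j ∨ j + 1 = i then -1 else 0

/-- Cartan matrix of type `C_n`. -/
def cartanC (n : ℕ) (i j : ℕ) : ℤ :=
  if i = j then 2
  else if i = n - 1 ∧ j = n then -2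
  else if i + 1 = j ∨ j + 1 = i then -1 else 0

/-- Cartan matrix of type `D_n`. -/
def cartanD (n : ℕ) (i j : ℕ) : ℤ :=
  if i = j then 2
  else if (i = n - 1 ∧ j = n) ∨ (i = n ∧ j = n - 1) then 0
  else if (i + 1 = j ∨ j + 1 = i) ∨ (i = n ∧ j = n - 2) ∨ (i = n - 2 ∧ j = n) then -1
  else 0

/-- `ι` (with positions indexed by `k ≥ 1`) takes values in `{1,…,n}`, has no two equal
consecutive entries, and every index occurs infinitely often. -/
def Admissible (n : ℕ) (ι : ℕ → ℕ) : Prop :=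
  (∀ k, 1 ≤ k → 1 ≤ ι k ∧ ι k ≤ n) ∧
  (∀ k, 1 ≤ k → ι k ≠ ι (k + 1)) ∧
  (∀ i, 1 ≤ i → i ≤ n → ∀ N, ∃ k, N ≤ k ∧ ι k = i)

/-- `k^+`: the next position after `k` carrying the same letter. -/
def kplus (ι : ℕ → ℕ) (k : ℕ) : ℕ := sInf {l | k < l ∧ ι l = ι k}

/-- `k^-`: the previous position (`≥ 1`) carrying the same letter, `0` if none. -/
def kminus (ι : ℕ → ℕ) (k : ℕ) : ℕ := sSup {l | 0 < l ∧ l < k ∧ ι l = ι k}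

/-- The linear form `β_k` (with `β_0 = 0`). -/
def beta (A : ℕ → ℕ → ℤ) (ι : ℕ → ℕ) (k : ℕ) : ℕ → ℚ :=
  if k = 0 then 0
  else xc k + (∑ j ∈ Finset.Ioo k (kplus ι k), (A (ι k) (ι j) : ℚ) • xc j) + xc (kplus ι k)

/-- The piecewise-linear operator `S_k`. -/
def Sop (A : ℕ → ℕ → ℤ) (ι : ℕ → ℕ) (k : ℕ) (φ : ℕ → ℚ) : ℕ → ℚ :=
  if 0 < φ k then φ - φ k • beta A ι k
  else φ - φ k • beta A ι (kminus ι k)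

/-- Membership in `Ξ_ι`: forms obtained from some `x_{j_0}` by finitely many operators `S_k`. -/
inductive XiMem (A : ℕ → ℕ → ℤ) (ι : ℕ → ℕ) : (ℕ → ℚ) → Prop
  | base (k : ℕ) (hk : 1 ≤ k) : XiMem A ι (xc k)
  | step (k : ℕ) (hk : 1 ≤ k) (φ : ℕ → ℚ) (h : XiMem A ι φ) : XiMem A ι (Sop A ι k φ)

/-- The set `Ξ_ι`. -/
def Xi (A : ℕ → ℕ → ℤ) (ι : ℕ → ℕ) : Set (ℕ → ℚ) := { φ | XiMem A ι φ }

/-- Forms obtained from a set `g` of generators by finitely many operators `S_k`. -/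
inductive XiMemFrom (A : ℕ → ℕ → ℤ) (ι : ℕ → ℕ) (g : Set (ℕ → ℚ)) : (ℕ → ℚ) → Prop
  | base (φ : ℕ → ℚ) (h : φ ∈ g) : XiMemFrom A ι g φ
  | step (k : ℕ) (hk : 1 ≤ k) (φ : ℕ → ℚ) (h : XiMemFrom A ι g φ) :
      XiMemFrom A ι g (Sop A ι k φ)

/-- `ι` is adapted to the Cartan matrix `A`: for `i ≠ j` with `a_{i,j} ≠ 0`, consecutive
members of the subsequence of `ι` consisting of the letters `i`, `j` are distinct. -/
def Adapted (n : ℕ) (A : ℕ → ℕ → ℤ) (ι : ℕ → ℕ) : Prop :=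
  ∀ i j, 1 ≤ i → i ≤ n → 1 ≤ j → j ≤ n → i ≠ j → A i j ≠ 0 →
    ∀ k l, 1 ≤ k → k < l → (ι k = i ∨ ι k = j) → (ι l = i ∨ ι l = j) →
      (∀ m, k < m → m < l → ι m ≠ i ∧ ι m ≠ j) → ι k ≠ ι l

/-- Position of the first occurrence of the letter `i` in `ι`. -/
def firstOcc (ι : ℕ → ℕ) (i : ℕ) : ℕ := sInf {k | 1 ≤ k ∧ ι k = i}

/-- `p_{i,j} = 1` iff the first occurrence of `i` precedes the first occurrence of `j`. -/
def pval (ι : ℕ → ℕ) (i j : ℕ) : ℕ := if firstOcc ι i < firstOcc ι j then 1 else 0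

/-- The function `P(k)` for types A, B, C (and `P(k) = 0` for `k > n`, `k ≤ 1`). -/
def PABC (ι : ℕ → ℕ) (n k : ℕ) : ℕ :=
  if k ≤ n then ∑ t ∈ Finset.Icc 2 k, pval ι t (t - 1) else 0

/-- The function `P(k)` for type D. -/
def PD (ι : ℕ → ℕ) (n k : ℕ) : ℕ :=
  if k = n then (∑ t ∈ Finset.Icc 2 (n - 2), pval ι t (t - 1)) + pval ι n (n - 2)
  else if k ≤ n then ∑ t ∈ Finset.Icc 2 k, pval ι t (t - 1) else 0

/-- `occPos ι j s`: the position of the `s`-th occurrence of the letter `j` in `ι`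
(`0` for `s = 0`). -/
def occPos (ι : ℕ → ℕ) (j : ℕ) : ℕ → ℕ
  | 0 => 0
  | s + 1 => sInf {k | occPos ι j s < k ∧ ι k = j}

/-- The double-indexed coordinate form `x_{s,j}`, with the conventions
`x_{s,0} = x_{s,n+1} = 0` and `x_{s,j} = 0` for `s ≤ 0`. -/
def xsj (ι : ℕ → ℕ) (n : ℕ) (s : ℤ) (j : ℕ) : ℕ → ℚ :=
  if 1 ≤ s ∧ 1 ≤ j ∧ j ≤ n then xc (occPos ι j s.toNat) else 0

/-- The double-indexed form `β_{s,j}`. -/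
def betasj (A : ℕ → ℕ → ℤ) (ι : ℕ → ℕ) (s : ℤ) (j : ℕ) : ℕ → ℚ :=
  beta A ι (occPos ι j s.toNat)

/-- The double-indexed operator `S_{m,j}`. -/
def Ssj (A : ℕ → ℕ → ℤ) (ι : ℕ → ℕ) (m j : ℕ) (φ : ℕ → ℚ) : ℕ → ℚ :=
  Sop A ι (occPos ι j m) φ

/- Entries of the ordered sets `J_X` are encoded as natural numbers:
an unbarred entry `j ∈ {1,…,n}` is encoded as `j`, a barred entry `j̄` is
encoded as `2n+1-j` (so that `n̄ = n+1, …, 1̄ = 2n` and the total order of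
`J_B = J_C` is the numerical order), and the extra symbol `ovl(n+1)` of
types C and D is encoded as `0`. -/

/-- The box of type A. -/
def boxA (ι : ℕ → ℕ) (n : ℕ) (s : ℤ) (j : ℕ) : ℕ → ℚ :=
  xsj ι n (s + (PABC ι n j : ℤ)) j - xsj ι n (s + (PABC ι n (j - 1) : ℤ) + 1) (j - 1)

/-- The box of type B. -/
def boxB (ι : ℕ → ℕ) (n : ℕ) (s : ℤ) (e : ℕ) : ℕ → ℚ :=
  if e ≤ n then
    xsj ι n (s + (PABC ι n e : ℤ)) e - xsj ι n (s + (PABC ι n (e - 1) : ℤ) + 1) (e - 1)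
  else
    xsj ι n (s + (PABC ι n (2 * n - e) : ℤ) + (n : ℤ) - ((2 * n + 1 - e : ℕ) : ℤ) + 1)
        (2 * n - e)
      - xsj ι n (s + (PABC ι n (2 * n + 1 - e) : ℤ) + (n : ℤ) - ((2 * n + 1 - e : ℕ) : ℤ) + 1)
          (2 * n + 1 - e)

/-- The box of type C (`ovl(n+1)` encoded as `0`). -/
def boxC (ι : ℕ → ℕ) (n : ℕ) (s : ℤ) (e : ℕ) : ℕ → ℚ :=
  if e = 0 then xsj ι n (s + (PABC ι n n : ℤ)) n
  else if e < n then
    xsj ι n (s + (PABC ι n e : ℤ)) e - xsj ι n (s + (PABC ι n (e - 1) : ℤ) + 1) (e - 1)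
  else if e = n then
    (2 : ℚ) • xsj ι n (s + (PABC ι n n : ℤ)) n
      - xsj ι n (s + (PABC ι n (n - 1) : ℤ) + 1) (n - 1)
  else if e = n + 1 then
    xsj ι n (s + (PABC ι n (n - 1) : ℤ) + 1) (n - 1)
      - (2 : ℚ) • xsj ι n (s + (PABC ι n n : ℤ) + 1) n
  else
    xsj ι n (s + (PABC ι n (2 * n - e) : ℤ) + (n : ℤ) - ((2 * n + 1 - e : ℕ) : ℤ) + 1)
        (2 * n - e)
      - xsj ι n (s + (PABC ι n (2 * n + 1 - e) : ℤ) + (n : ℤ) - ((2 * n + 1 - e : ℕ) : ℤ) + 1)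
          (2 * n + 1 - e)

/-- The box of type D (`ovl(n+1)` encoded as `0`, `n̄` as `n+1`, `ovl(n-1)` as `n+2`). -/
def boxD (ι : ℕ → ℕ) (n : ℕ) (s : ℤ) (e : ℕ) : ℕ → ℚ :=
  if e = 0 then xsj ι n (s + (PD ι n n : ℤ)) n
  else if e ≤ n - 2 then
    xsj ι n (s + (PD ι n e : ℤ)) e - xsj ι n (s + (PD ι n (e - 1) : ℤ) + 1) (e - 1)
  else if e = n - 1 then
    xsj ι n (s + (PD ι n (n - 1) : ℤ)) (n - 1) + xsj ι n (s + (PD ι n n : ℤ)) n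
      - xsj ι n (s + (PD ι n (n - 2) : ℤ) + 1) (n - 2)
  else if e = n then
    xsj ι n (s + (PD ι n n : ℤ)) n - xsj ι n (s + (PD ι n (n - 1) : ℤ) + 1) (n - 1)
  else if e = n + 1 then
    xsj ι n (s + (PD ι n (n - 1) : ℤ)) (n - 1) - xsj ι n (s + (PD ι n n : ℤ) + 1) n
  else if e = n + 2 then
    xsj ι n (s + (PD ι n (n - 2) : ℤ) + 1) (n - 2)
      - xsj ι n (s + (PD ι n (n - 1) : ℤ) + 1) (n - 1)
      - xsj ι n (s + (PD ι n n : ℤ) + 1) n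
  else
    xsj ι n (s + (PD ι n (2 * n - e) : ℤ) + (n : ℤ) - ((2 * n + 1 - e : ℕ) : ℤ)) (2 * n - e)
      - xsj ι n (s + (PD ι n (2 * n + 1 - e) : ℤ) + (n : ℤ) - ((2 * n + 1 - e : ℕ) : ℤ))
          (2 * n + 1 - e)

/-- The column tableau `[j_1,…,j_k]_s = Σ_{i=1}^k box_{s+k-i}(j_i)`. -/
def tab (box : ℤ → ℕ → ℕ → ℚ) (s : ℤ) (k : ℕ) (j : ℕ → ℕ) : ℕ → ℚ :=
  ∑ i ∈ Finset.Icc 1 k, box (s + (k : ℤ) - (i : ℤ)) (j i)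

/-- The set `Tab_{A,ι}`. -/
def TabA (ι : ℕ → ℕ) (n : ℕ) : Set (ℕ → ℚ) :=
  { T | ∃ (k : ℕ) (s : ℤ) (j : ℕ → ℕ),
      1 ≤ k ∧ k ≤ n ∧
      (∀ i, 1 ≤ i → i ≤ k → 1 ≤ j i ∧ j i ≤ n + 1) ∧
      (∀ i, 1 ≤ i → i < k → j i < j (i + 1)) ∧
      1 - (PABC ι n k : ℤ) ≤ s ∧
      T = tab (boxA ι n) s k j }

/-- `|·|` on encoded entries of `J_B = J_C`. -/
def absJ (n e : ℕ) : ℕ := if e ≤ n then e else 2 * n + 1 - e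

/-- The set `Tab_{B,ι}`. -/
def TabB (ι : ℕ → ℕ) (n : ℕ) : Set (ℕ → ℚ) :=
  { T | ∃ (k : ℕ) (s : ℤ) (j : ℕ → ℕ),
      1 ≤ k ∧ k ≤ n ∧
      (∀ i, 1 ≤ i → i ≤ k → 1 ≤ j i ∧ j i ≤ 2 * n) ∧
      (∀ i, 1 ≤ i → i < k → j i < j (i + 1)) ∧
      (k = n → ∀ l m, 1 ≤ l → l < m → m ≤ k → absJ n (j l) ≠ absJ n (j m)) ∧
      1 - (PABC ι n k : ℤ) ≤ s ∧
      T = tab (boxB ι n) s k j }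

/-- Defining conditions of `Tab_{C,ι}` on the data `(k,s,j)`. -/
def TabCcond (ι : ℕ → ℕ) (n : ℕ) (k : ℕ) (s : ℤ) (j : ℕ → ℕ) : Prop :=
  (1 ≤ k ∧ k ≤ n - 1 ∧
    (∀ i, 1 ≤ i → i ≤ k → 1 ≤ j i ∧ j i ≤ 2 * n) ∧
    (∀ i, 1 ≤ i → i < k → j i < j (i + 1)) ∧
    1 - (PABC ι n k : ℤ) ≤ s)
  ∨
  (j 1 = 0 ∧ 1 ≤ k ∧ k ≤ n + 1 ∧
    (∀ i, 2 ≤ i → i ≤ k → n + 1 ≤ j i ∧ j i ≤ 2 * n) ∧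
    (∀ i, 2 ≤ i → i < k → j i < j (i + 1)) ∧
    1 - (PABC ι n n : ℤ) ≤ s)

/-- The set `Tab_{C,ι}`. -/
def TabC (ι : ℕ → ℕ) (n : ℕ) : Set (ℕ → ℚ) :=
  { T | ∃ k s j, TabCcond ι n k s j ∧ T = tab (boxC ι n) s k j }

/-- The partial order on (encoded) `J_D`: `a ≤ b` iff `a = b`, or `a < b` numerically and
`(a,b)` is not the incomparable pair `(n, n̄)`. -/
def leD (n a b : ℕ) : Prop := a = b ∨ (a < b ∧ ¬(a = n ∧ b = n + 1))

/-- Defining conditions of `Tab_{D,ι}` on the data `(k,s,j)`. -/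
def TabDcond (ι : ℕ → ℕ) (n : ℕ) (k : ℕ) (s : ℤ) (j : ℕ → ℕ) : Prop :=
  (1 ≤ k ∧ k ≤ n - 2 ∧
    (∀ i, 1 ≤ i → i ≤ k → 1 ≤ j i ∧ j i ≤ 2 * n) ∧
    (∀ i, 1 ≤ i → i < k → ¬ leD n (j (i + 1)) (j i)) ∧
    1 - (PD ι n k : ℤ) ≤ s)
  ∨
  (j 1 = 0 ∧ 1 ≤ k ∧ k ≤ n + 1 ∧
    (∀ i, 2 ≤ i → i ≤ k → n + 1 ≤ j i ∧ j i ≤ 2 * n) ∧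
    (∀ i, 2 ≤ i → i < k → j i < j (i + 1)) ∧
    (k % 2 = 0 → 1 - (PD ι n (n - 1) : ℤ) ≤ s) ∧
    (k % 2 = 1 → 1 - (PD ι n n : ℤ) ≤ s))

/-- The set `Tab_{D,ι}`. -/
def TabD (ι : ℕ → ℕ) (n : ℕ) : Set (ℕ → ℚ) :=
  { T | ∃ k s j, TabDcond ι n k s j ∧ T = tab (boxD ι n) s k j }

end

/-- Number of occurrences of `i` among positions `1,…,K`. -/
def cntL (ι : ℕ → ℕ) (i : ℕ) : ℕ → ℕ
  | 0 => 0
  | K + 1 => cntL ι i K + if ι (K + 1) = i then 1 else 0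

theorem cntL_mono (ι : ℕ → ℕ) (i : ℕ) {a b : ℕ} (h : a ≤ b) : cntL ι i a ≤ cntL ι i b := by
  induction b, h using Nat.le_induction with
  | base => exact le_rfl
  | succ b _ ih => simp only [cntL]; omega

theorem cntL_lt (ι : ℕ → ℕ) (i : ℕ) {a b : ℕ} (h : a < b) (hb : ι b = i) :
    cntL ι i a < cntL ι i b := by
  obtain ⟨c, rfl⟩ : ∃ c, b = c + 1 := ⟨b - 1, by omega⟩
  have := cntL_mono ι i (show a ≤ c by omega)
  simp only [cntL, hb, if_true]; omega

theorem cntL_eq_of_none (ι : ℕ → ℕ) (i : ℕ) {a b : ℕ} (h : a ≤ b)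
    (hn : ∀ m, a < m → m ≤ b → ι m ≠ i) : cntL ι i b = cntL ι i a := by
  induction b, h using Nat.le_induction with
  | base => rfl
  | succ b hb ih =>
    have h1 := ih (fun m h1 h2 => hn m h1 (by omega))
    have h2 := hn (b + 1) (by omega) le_rfl
    simp only [cntL, if_neg h2]; omega

theorem cntL_succ_of_none (ι : ℕ → ℕ) (i : ℕ) {a b : ℕ} (h : a < b) (hb : ι b = i)
    (hn : ∀ m, a < m → m < b → ι m ≠ i) : cntL ι i b = cntL ι i a + 1 := by
  obtain ⟨c, rfl⟩ : ∃ c, b = c + 1 := ⟨b - 1, by omega⟩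
  have := cntL_eq_of_none ι i (show a ≤ c by omega) (fun m h1 h2 => hn m h1 (by omega))
  simp only [cntL, hb, if_true]; omega

theorem cntL_inj (ι : ℕ → ℕ) (i : ℕ) {a b : ℕ} (ha : ι a = i) (hb : ι b = i)
    (h : cntL ι i a = cntL ι i b) : a = b := by
  rcases lt_trichotomy a b with h1 | h1 | h1
  · have := cntL_lt ι i h1 hb; omega
  · exact h1
  · have := cntL_lt ι i h1 ha; omega

theorem sInf_next (ι : ℕ → ℕ) (i N : ℕ) (hex : ∀ N, ∃ k, N ≤ k ∧ ι k = i) :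
    N < sInf {k | N < k ∧ ι k = i} ∧ ι (sInf {k | N < k ∧ ι k = i}) = i ∧
    ∀ m, N < m → m < sInf {k | N < k ∧ ι k = i} → ι m ≠ i := by
  have hne : {k | N < k ∧ ι k = i}.Nonempty := by
    obtain ⟨k, h1, h2⟩ := hex (N + 1)
    exact ⟨k, by omega, h2⟩
  have h1 := Nat.sInf_mem hne
  refine ⟨h1.1, h1.2, fun m h2 h3 h4 => ?_⟩
  exact Nat.notMem_of_lt_sInf h3 ⟨h2, h4⟩

theorem occPos_spec (ι : ℕ → ℕ) (i : ℕ) (hex : ∀ N, ∃ k, N ≤ k ∧ ι k = i) (s : ℕ) :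
    1 ≤ occPos ι i (s + 1) ∧ ι (occPos ι i (s + 1)) = i ∧
      cntL ι i (occPos ι i (s + 1)) = s + 1 := by
  induction s with
  | zero =>
    obtain ⟨h1, h2, h3⟩ := sInf_next ι i 0 hex
    simp only [occPos]
    refine ⟨h1, h2, ?_⟩
    rw [cntL_succ_of_none ι i h1 h2 h3]; rfl
  | succ s ih =>
    obtain ⟨h1, h2, h3⟩ := sInf_next ι i (occPos ι i (s + 1)) hex
    rw [occPos]
    refine ⟨by omega, h2, ?_⟩
    rw [cntL_succ_of_none ι i h1 h2 h3, ih.2.2]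

theorem cntL_alt (ι : ℕ → ℕ) (i j : ℕ) (hij : i ≠ j)
    (hexi : ∀ N, ∃ k, N ≤ k ∧ ι k = i) (hexj : ∀ N, ∃ k, N ≤ k ∧ ι k = j)
    (hal : ∀ k l, 1 ≤ k → k < l → (ι k = i ∨ ι k = j) → (ι l = i ∨ ι l = j) →
      (∀ m, k < m → m < l → ι m ≠ i ∧ ι m ≠ j) → ι k ≠ ι l) (l : ℕ) (hl : 1 ≤ l) :
    (ι l = j → cntL ι i l + pval ι j i = cntL ι j l) ∧
    (ι l = i → cntL ι j l + 1 = cntL ι i l + pval ι j i) := by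
  induction l using Nat.strong_induction_on with
  | _ l ih =>
  by_cases hlij : ι l = i ∨ ι l = j
  swap
  · push Not at hlij
    exact ⟨fun h => absurd h hlij.2, fun h => absurd h hlij.1⟩
  by_cases hprev : ∃ m, 1 ≤ m ∧ m < l ∧ (ι m = i ∨ ι m = j) ∧
      ∀ m', m < m' → m' < l → ι m' ≠ i ∧ ι m' ≠ j
  · obtain ⟨m, hm1, hm2, hm3, hm4⟩ := hprev
    have hne := hal m l hm1 hm2 hm3 hlij hm4
    obtain ⟨e1, e2⟩ := ih m hm2 hm1
    constructor
    · intro hj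
      have hmi : ι m = i := by
        rcases hm3 with h | h
        · exact h
        · exact absurd (h.trans hj.symm) hne
      have a1 := cntL_succ_of_none ι j hm2 hj (fun m' h1 h2 => (hm4 m' h1 h2).2)
      have a2 : cntL ι i l = cntL ι i m := cntL_eq_of_none ι i hm2.le (fun m' h1 h2 => by
        rcases h2.lt_or_eq with h | h
        · exact (hm4 m' h1 h).1
        · rw [h, hj]; exact hij.symm)
      have := e2 hmi
      omega
    · intro hi
      have hmj : ι m = j := by
        rcases hm3 with h | h
        · exact absurd (h.trans hi.symm) hne
        · exact h
      have a1 := cntL_succ_of_none ι i hm2 hi (fun m' h1 h2 => (hm4 m' h1 h2).1)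
      have a2 : cntL ι j l = cntL ι j m := cntL_eq_of_none ι j hm2.le (fun m' h1 h2 => by
        rcases h2.lt_or_eq with h | h
        · exact (hm4 m' h1 h).2
        · rw [h, hi]; exact hij)
      have := e1 hmj
      omega
  · have hnone : ∀ m, 0 < m → m < l → ι m ≠ i ∧ ι m ≠ j := by
      by_contra hcon
      push Not at hcon
      have hcon' : ∃ m, 1 ≤ m ∧ m < l ∧ (ι m = i ∨ ι m = j) := by
        obtain ⟨m, h1, h2, h3⟩ := hcon
        refine ⟨m, h1, h2, ?_⟩
        by_cases h : ι m = i
        · exact Or.inl h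
        · exact Or.inr (h3 h)
      let S := (Finset.range l).filter (fun m => 1 ≤ m ∧ (ι m = i ∨ ι m = j))
      have hS : S.Nonempty := by
        obtain ⟨m, h1, h2, h3⟩ := hcon'
        exact ⟨m, by simp [S]; exact ⟨h2, h1, h3⟩⟩
      have hM := S.max'_mem hS
      simp only [S, Finset.mem_filter, Finset.mem_range] at hM
      apply hprev
      refine ⟨S.max' hS, hM.2.1, hM.1, hM.2.2, fun m' h1 h2 => ?_⟩
      by_contra hc
      have : m' ∈ S := by
        simp only [S, Finset.mem_filter, Finset.mem_range]
        refine ⟨h2, by omega, ?_⟩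
        by_contra h; push Not at h; exact hc h
      have := S.le_max' m' this
      omega
    have key : ∀ a b, (ι l = a) → (a = i ∧ b = j ∨ a = j ∧ b = i) → a ≠ b →
        (∀ N, ∃ k, N ≤ k ∧ ι k = b) → firstOcc ι a < firstOcc ι b := by
      intro a b hla hab hne hexb
      have h1 : firstOcc ι a ≤ l := Nat.sInf_le ⟨hl, hla⟩
      have hn : {k | 1 ≤ k ∧ ι k = b}.Nonempty := by
        obtain ⟨k, h1, h2⟩ := hexb 1
        exact ⟨k, h1, h2⟩
      have h2 := Nat.sInf_mem hn
      have h3 : l < firstOcc ι b := by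
        by_contra hc
        rcases (not_lt.mp hc).lt_or_eq with h | h
        · have := hnone _ h2.1 h
          rcases hab with ⟨rfl, rfl⟩ | ⟨rfl, rfl⟩
          · exact this.2 h2.2
          · exact this.1 h2.2
        · apply hne; rw [← hla, ← h]; exact h2.2
      omega
    constructor
    · intro hj
      have hp : pval ι j i = 1 := by
        have := key j i hj (Or.inr ⟨rfl, rfl⟩) hij.symm hexi
        simp [pval, this]
      have a1 := cntL_succ_of_none ι j hl hj (fun m' h1 h2 => (hnone m' h1 h2).2)
      have a2 : cntL ι i l = cntL ι i 0 := cntL_eq_of_none ι i (by omega) (fun m' h1 h2 => by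
        rcases h2.lt_or_eq with h | h
        · exact (hnone m' h1 h).1
        · rw [h, hj]; exact hij.symm)
      simp only [cntL] at a1 a2
      omega
    · intro hi
      have hp : pval ι j i = 0 := by
        have := key i j hi (Or.inl ⟨rfl, rfl⟩) hij hexj
        simp [pval]; omega
      have a1 := cntL_succ_of_none ι i hl hi (fun m' h1 h2 => (hnone m' h1 h2).1)
      have a2 : cntL ι j l = cntL ι j 0 := cntL_eq_of_none ι j (by omega) (fun m' h1 h2 => by
        rcases h2.lt_or_eq with h | h
        · exact (hnone m' h1 h).2
        · rw [h, hi]; exact hij)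
      simp only [cntL] at a1 a2
      omega

theorem cntL_pos (ι : ℕ → ℕ) {k : ℕ} (hk : 1 ≤ k) : 1 ≤ cntL ι (ι k) k := by
  have := cntL_lt ι (ι k) (show 0 < k by omega) rfl
  omega

theorem beta_apply (A : ℕ → ℕ → ℤ) (ι : ℕ → ℕ) (k l : ℕ) (hk : 1 ≤ k) (hl : 1 ≤ l)
    (hex : ∀ N, ∃ m, N ≤ m ∧ ι m = ι k) :
    beta A ι k l = if ι l = ι k then
        (if cntL ι (ι k) l = cntL ι (ι k) k ∨ cntL ι (ι k) l = cntL ι (ι k) k + 1 then 1 else 0)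
      else if cntL ι (ι k) l = cntL ι (ι k) k then (A (ι k) (ι l) : ℚ) else 0 := by
  obtain ⟨h1, h2, h3⟩ := sInf_next ι (ι k) k hex
  change k < kplus ι k at h1
  change ι (kplus ι k) = _ at h2
  change ∀ m, k < m → m < kplus ι k → _ at h3
  have hc := cntL_succ_of_none ι (ι k) h1 h2 h3
  have e : beta A ι k l = (if l = k then 1 else 0) +
      (if k < l ∧ l < kplus ι k then (A (ι k) (ι l) : ℚ) else 0) +
      (if l = kplus ι k then 1 else 0) := by
    simp only [beta, if_neg (show k ≠ 0 by omega), Pi.add_apply, Finset.sum_apply, Pi.smul_apply,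
      xc, smul_eq_mul, mul_ite, mul_one, mul_zero, Finset.sum_ite_eq, Finset.mem_Ioo]
  rw [e]
  by_cases hlk : ι l = ι k
  · have n1 : ¬ (k < l ∧ l < kplus ι k) := fun h => h3 l h.1 h.2 hlk
    rw [if_neg n1, if_pos hlk]
    by_cases a : l = k
    · subst a; simp [h1.ne]
    · by_cases b : l = kplus ι k
      · subst b; simp [a, hc]
      · rw [if_neg a, if_neg b, if_neg]
        · simp
        · rintro (h | h)
          · exact a (cntL_inj ι (ι k) hlk rfl h)
          · exact b (cntL_inj ι (ι k) hlk h2 (by omega))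
  · have n1 : l ≠ k := fun h => hlk (by rw [h])
    have n2 : l ≠ kplus ι k := fun h => hlk (by rw [h, h2])
    rw [if_neg hlk, if_neg n1, if_neg n2]
    have : (k < l ∧ l < kplus ι k) ↔ cntL ι (ι k) l = cntL ι (ι k) k := by
      constructor
      · rintro ⟨a, b⟩
        exact cntL_eq_of_none ι (ι k) a.le (fun m h4 h5 => h3 m h4 (by omega))
      · intro h
        constructor
        · by_contra hc'
          have : l ≠ k := fun h => hlk (by rw [h])
          have := cntL_lt ι (ι k) (show l < k by omega) rfl
          omega
        · by_contra hc'
          have := cntL_mono ι (ι k) (show kplus ι k ≤ l by omega)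
          omega
    simp [this]

theorem kminus_eq (ι : ℕ → ℕ) (k k' : ℕ) (hk' : 1 ≤ k') (h : ι k' = ι k)
    (hc : cntL ι (ι k) k = cntL ι (ι k) k' + 1) : kminus ι k = k' := by
  have : IsGreatest {l | 0 < l ∧ l < k ∧ ι l = ι k} k' := by
    refine ⟨⟨hk', ?_, h⟩, ?_⟩
    · by_contra hh
      have := cntL_mono ι (ι k) (show k ≤ k' by omega)
      omega
    · rintro l ⟨h1, h2, h3⟩
      by_contra hh
      have a := cntL_lt ι (ι k) (show k' < l by omega) h3
      have b := cntL_lt ι (ι k) h2 rfl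
      omega
  exact this.csSup_eq

/-- The properties shared by the Cartan matrices `B_n` (`w = 2`) and `C_n` (`w = 1`). -/
structure CartanW (n : ℕ) (w : ℤ) (A : ℕ → ℕ → ℤ) : Prop where
  wpos : 0 < w
  far : ∀ i j, i ≠ j → i + 1 ≠ j → j + 1 ≠ i → A i j = 0
  down : ∀ i, 1 ≤ i → i + 1 < n → A (i + 1) i = -1
  downn : ∀ i, 1 ≤ i → i + 1 = n → A (i + 1) i = -w
  up : ∀ i, 1 ≤ i → i + 1 < n → A i (i + 1) = -1
  upn : ∀ i, 1 ≤ i → i + 1 = n → w * A i (i + 1) = -2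

theorem cartanW_B (n : ℕ) : CartanW n 2 (cartanB n) := by
  constructor
  · norm_num
  · intro i j h1 h2 h3
    grind [cartanB]
  · intro i h1 h2
    grind [cartanB]
  · intro i h1 h2
    grind [cartanB]
  · intro i h1 h2
    grind [cartanB]
  · intro i h1 h2
    grind [cartanB]

theorem cartanW_C (n : ℕ) : CartanW n 1 (cartanC n) := by
  constructor
  · norm_num
  · intro i j h1 h2 h3
    grind [cartanC]
  · intro i h1 h2
    grind [cartanC]
  · intro i h1 h2
    grind [cartanC]
  · intro i h1 h2
    grind [cartanC]
  · intro i h1 h2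
    grind [cartanC]

/-- The height functions parametrizing the subsets of `{1,…,n}`. -/
structure Valid (n : ℕ) (g : ℕ → ℤ) : Prop where
  zero : g 0 = 0
  step : ∀ t, t < n → g (t + 1) = g t ∨ g (t + 1) = g t + 1

/-- Occurrence index used by the letter `t`. -/
noncomputable def qf (ι : ℕ → ℕ) (n : ℕ) (s : ℤ) (g : ℕ → ℤ) (t : ℕ) : ℤ :=
  s + PABC ι n t + n - t + g t

/-- Coefficient of the letter `t`. -/
def cf (n : ℕ) (w : ℤ) (g : ℕ → ℤ) (t : ℕ) : ℤ :=
  if t = n then 1 - 2 * (g t - g (t - 1)) else w * (g (t + 1) + g (t - 1) - 2 * g t)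

/-- The linear form attached to a height function. -/
noncomputable def Fm (ι : ℕ → ℕ) (n : ℕ) (w : ℤ) (s : ℤ) (g : ℕ → ℤ) : ℕ → ℚ := fun k =>
  if k = 0 then 0 else
  if (cntL ι (ι k) k : ℤ) = qf ι n s g (ι k) then (cf n w g (ι k) : ℚ) else 0

theorem PABC_succ (ι : ℕ → ℕ) (n t : ℕ) (h1 : 1 ≤ t) (h2 : t + 1 ≤ n) :
    PABC ι n (t + 1) = PABC ι n t + pval ι (t + 1) t := by
  simp only [PABC, if_pos h2, if_pos (show t ≤ n by omega)]
  rw [Finset.sum_Icc_succ_top (by omega)]; simp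

theorem pval_le (ι : ℕ → ℕ) (i j : ℕ) : pval ι i j ≤ 1 := by
  unfold pval; split_ifs <;> omega

theorem pval_swap (ι : ℕ → ℕ) (i j : ℕ) (hij : i ≠ j)
    (hexi : ∀ N, ∃ k, N ≤ k ∧ ι k = i) (hexj : ∀ N, ∃ k, N ≤ k ∧ ι k = j) :
    pval ι i j + pval ι j i = 1 := by
  have ni : {k | 1 ≤ k ∧ ι k = i}.Nonempty := (hexi 1).imp fun k h => h
  have nj : {k | 1 ≤ k ∧ ι k = j}.Nonempty := (hexj 1).imp fun k h => h
  have a := Nat.sInf_mem ni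
  have b := Nat.sInf_mem nj
  have : firstOcc ι i ≠ firstOcc ι j := by
    intro h
    apply hij
    rw [← a.2, ← b.2]
    exact congrArg ι h
  unfold pval; split_ifs <;> omega

theorem PABC_top (ι : ℕ → ℕ) (n t : ℕ) (h1 : 1 ≤ t) (h2 : t ≤ n) :
    PABC ι n n + t ≤ PABC ι n t + n := by
  obtain ⟨d, rfl⟩ : ∃ d, t + d = n := ⟨n - t, by omega⟩
  have : ∀ e, e ≤ d → PABC ι (t + d) (t + e) ≤ PABC ι (t + d) t + e := by
    intro e
    induction e with
    | zero => intro _; simp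
    | succ e ih =>
      intro he
      have := ih (by omega)
      have h3 := PABC_succ ι (t + d) (t + e) (by omega) (by omega)
      have h4 := pval_le ι (t + e + 1) (t + e)
      rw [← add_assoc]; omega
  have := this d le_rfl
  omega

theorem Valid.nonneg {n : ℕ} {g : ℕ → ℤ} (hg : Valid n g) (t : ℕ) (ht : t ≤ n) : 0 ≤ g t := by
  induction t with
  | zero => rw [hg.zero]
  | succ t ih =>
    have := ih (by omega)
    rcases hg.step t (by omega) with h | h <;> omega

theorem qf_pos (ι : ℕ → ℕ) (n : ℕ) (s : ℤ) (g : ℕ → ℤ) (hs : 1 - (PABC ι n n : ℤ) ≤ s) (t : ℕ)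
    (h1 : 1 ≤ t) (h2 : t ≤ n) : 1 + g t ≤ qf ι n s g t := by
  have := PABC_top ι n t h1 h2
  unfold qf; omega

/-- The main identity: moving the letter `i` forward. -/
theorem Fm_move (n : ℕ) (hn : 2 ≤ n) (ι : ℕ → ℕ) (hadm : Admissible n ι) (w : ℤ)
    (A : ℕ → ℕ → ℤ) (hA : CartanW n w A) (had : Adapted n A ι) (s : ℤ) (g : ℕ → ℤ) (k : ℕ)
    (hk : 1 ≤ k) (i : ℕ) (hi : ι k = i) (hg1 : g i = g (i - 1))
    (hg2 : i = n ∨ g (i + 1) = g i + 1) (hq : (cntL ι i k : ℤ) = qf ι n s g i) :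
    Fm ι n w s (Function.update g i (g i + 1)) =
      Fm ι n w s g - (cf n w g i : ℚ) • beta A ι k := by
  have hi1 : 1 ≤ i := hi ▸ (hadm.1 k hk).1
  have hin : i ≤ n := hi ▸ (hadm.1 k hk).2
  have hexi := hadm.2.2 i hi1 hin
  funext l
  rcases Nat.eq_zero_or_pos l with rfl | hl
  · have : beta A ι k 0 = 0 := by
      obtain ⟨h1, h2, h3⟩ := sInf_next ι (ι k) k (hi ▸ hexi)
      change k < kplus ι k at h1
      simp [beta, xc, Finset.sum_apply, (show k ≠ 0 by omega),
        (show (0 : ℕ) ≠ k by omega), (show (0 : ℕ) ≠ kplus ι k by omega)]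
    simp [Fm, this]
  have hb := beta_apply A ι k l hk hl (hi ▸ hexi)
  rw [hi] at hb
  obtain ⟨hl1, hln⟩ := hadm.1 l hl
  simp only [Pi.sub_apply, Pi.smul_apply, smul_eq_mul, hb, Fm, if_neg (show l ≠ 0 by omega)]
  generalize hj : ι l = j at *
  have hexj := hadm.2.2 j hl1 hln
  by_cases hji : j = i
  · subst hji
    have c1 : cf n w (Function.update g j (g j + 1)) j = - cf n w g j := by
      unfold cf
      have e1 : j - 1 ≠ j := by omega
      have e2 : j + 1 ≠ j := by omega
      rw [Function.update_self, Function.update_of_ne e1, Function.update_of_ne e2]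
      split_ifs with h
      · omega
      · rcases hg2 with h' | h'
        · exact absurd h' h
        · rw [h', hg1]; ring
    have q1 : qf ι n s (Function.update g j (g j + 1)) j = qf ι n s g j + 1 := by
      unfold qf; rw [Function.update_self]; ring
    rw [c1, q1, ← hq]
    simp only [if_true]
    by_cases a : cntL ι j l = cntL ι j k
    · simp [a]
    · by_cases b : cntL ι j l = cntL ι j k + 1
      · simp [b]
      · rw [if_neg (by omega), if_neg (by omega), if_neg (by omega)]; simp
  · have q1 : qf ι n s (Function.update g i (g i + 1)) j = qf ι n s g j := by
      unfold qf; rw [Function.update_of_ne hji]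
    rw [if_neg hji, q1]
    by_cases hadj : i + 1 = j ∨ j + 1 = i
    swap
    · push Not at hadj
      rw [hA.far i j (Ne.symm hji) hadj.1 hadj.2]
      have : cf n w (Function.update g i (g i + 1)) j = cf n w g j := by
        unfold cf
        rw [Function.update_of_ne (show j ≠ i by omega),
          Function.update_of_ne (show j - 1 ≠ i by omega),
          Function.update_of_ne (show j + 1 ≠ i by omega)]
      rw [this]; simp
    · have hAne : A i j ≠ 0 := by
        rcases hadj with rfl | rfl
        · rcases hln.lt_or_eq with h | h
          · rw [hA.up i hi1 h]; omega
          · intro h'; have := hA.upn i hi1 h; rw [h'] at this; omega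
        · rcases hin.lt_or_eq with h | h
          · rw [hA.down j hl1 h]; omega
          · have := hA.wpos; rw [hA.downn j hl1 h]; omega
      have halt := (cntL_alt ι i j (Ne.symm hji) hexi hexj
        (had i j hi1 hin hl1 hln (Ne.symm hji) hAne) l hl).1 hj
      have hsw := pval_swap ι i j (Ne.symm hji) hexi hexj
      have hiff : cntL ι i l = cntL ι i k ↔ (cntL ι j l : ℤ) = qf ι n s g j := by
        unfold qf at hq ⊢
        rcases hadj with rfl | rfl
        · have := PABC_succ ι n i hi1 hln
          rcases hg2 with h | h <;> omega
        · have := PABC_succ ι n j hl1 hin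
          simp only [Nat.add_sub_cancel] at hg1
          omega
      have hcc : cf n w (Function.update g i (g i + 1)) j = cf n w g j - cf n w g i * A i j := by
        rcases hadj with rfl | rfl
        · have hg3 : g (i + 1) = g i + 1 := by
            rcases hg2 with h | h
            · omega
            · exact h
          unfold cf
          rw [Function.update_of_ne (show i + 1 ≠ i by omega),
            Function.update_of_ne (show i + 1 + 1 ≠ i by omega)]
          simp only [Nat.add_sub_cancel, Function.update_self]
          rw [if_neg (show i ≠ n by omega)]
          rcases hln.lt_or_eq with h | h
          · rw [if_neg h.ne, if_neg h.ne, hA.up i hi1 h, hg3, ← hg1]; ring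
          · rw [if_pos h, if_pos h, hg3, ← hg1]
            have := hA.upn i hi1 h
            linear_combination this
        · simp only [Nat.add_sub_cancel] at hg1
          unfold cf
          rw [Function.update_of_ne (show j - 1 ≠ j + 1 by omega),
            Function.update_of_ne (show j ≠ j + 1 by omega)]
          simp only [Nat.add_sub_cancel, Function.update_self]
          rw [if_neg (show j ≠ n by omega), if_neg (show j ≠ n by omega)]
          rcases hin.lt_or_eq with h | h
          · rw [if_neg h.ne, hA.down j hl1 h]
            rcases hg2 with h' | h'
            · omega
            · rw [h', hg1]; ring
          · rw [if_pos h, hA.downn j hl1 h, hg1]; ring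
      rw [hcc]
      simp only [hiff]
      split_ifs <;> push_cast <;> ring

theorem exists_pos (n : ℕ) (ι : ℕ → ℕ) (hadm : Admissible n ι) (i : ℕ) (h1 : 1 ≤ i) (h2 : i ≤ n)
    (q : ℤ) (hq : 1 ≤ q) : ∃ k, 1 ≤ k ∧ ι k = i ∧ (cntL ι i k : ℤ) = q := by
  obtain ⟨m, rfl⟩ : ∃ m : ℕ, q = (m : ℤ) + 1 := ⟨(q - 1).toNat, by omega⟩
  have := occPos_spec ι i (hadm.2.2 i h1 h2) m
  exact ⟨_, this.1, this.2.1, by rw [this.2.2]; push_cast; rfl⟩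

theorem Valid.congr_succ {n : ℕ} {g : ℕ → ℤ} (hg : Valid n g) (t : ℕ) (h1 : 1 ≤ t) (h2 : t ≤ n) :
    g t = g (t - 1) ∨ g t = g (t - 1) + 1 := by
  have := hg.step (t - 1) (by omega)
  rwa [Nat.sub_add_cancel h1] at this

theorem Valid.upd {n : ℕ} {g : ℕ → ℤ} (hg : Valid n g) (i : ℕ) (h1 : 1 ≤ i) (v : ℤ)
    (ha : v = g (i - 1) ∨ v = g (i - 1) + 1) (hb : i < n → g (i + 1) = v ∨ g (i + 1) = v + 1) :
    Valid n (Function.update g i v) := by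
  constructor
  · rw [Function.update_of_ne (by omega)]; exact hg.zero
  · intro t ht
    by_cases a : t = i
    · subst a
      rw [Function.update_self, Function.update_of_ne (by omega)]; exact hb ht
    · rw [Function.update_of_ne a]
      by_cases b : t + 1 = i
      · subst b
        rw [Function.update_self]; simpa using ha
      · rw [Function.update_of_ne b]; exact hg.step t ht

/-- The family of forms is stable under the operators `S_k`. -/
theorem Fm_closed (n : ℕ) (hn : 2 ≤ n) (ι : ℕ → ℕ) (hadm : Admissible n ι) (w : ℤ)
    (A : ℕ → ℕ → ℤ) (hA : CartanW n w A) (had : Adapted n A ι) (s : ℤ)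
    (hs : 1 - (PABC ι n n : ℤ) ≤ s) (g : ℕ → ℤ) (hg : Valid n g) (k : ℕ) (hk : 1 ≤ k) :
    ∃ g', Valid n g' ∧ Sop A ι k (Fm ι n w s g) = Fm ι n w s g' := by
  obtain ⟨hi1, hin⟩ := hadm.1 k hk
  by_cases h0 : Fm ι n w s g k = 0
  · exact ⟨g, hg, by simp [Sop, h0]⟩
  generalize hi : ι k = i at *
  have hw := hA.wpos
  have hq : (cntL ι i k : ℤ) = qf ι n s g i := by
    by_contra hc
    apply h0
    simp [Fm, hi, hc]
  have hv : Fm ι n w s g k = (cf n w g i : ℚ) := by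
    simp [Fm, hi, hq, show k ≠ 0 by omega]
  have hc0 : cf n w g i ≠ 0 := by
    intro h; apply h0; rw [hv, h]; simp
  have hd := hg.congr_succ i hi1 hin
  rcases lt_or_gt_of_ne hc0 with hneg | hpos
  · -- backward move
    have hg1 : g i = g (i - 1) + 1 ∧ (i = n ∨ g (i + 1) = g i) := by
      unfold cf at hneg
      split_ifs at hneg with h
      · exact ⟨by omega, Or.inl h⟩
      · have h2 := hg.step i (by omega)
        have : g (i + 1) + g (i - 1) - 2 * g i < 0 := by
          by_contra hc
          have := mul_nonneg hw.le (not_lt.mp hc)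
          omega
        exact ⟨by omega, Or.inr (by omega)⟩
    obtain ⟨ha, hb⟩ := hg1
    have hqp := qf_pos ι n s g hs i hi1 hin
    have hnn := hg.nonneg (i - 1) (by omega)
    obtain ⟨k', hk1, hk2, hk3⟩ := exists_pos n ι hadm i hi1 hin (qf ι n s g i - 1) (by omega)
    have hkm : kminus ι k = k' := kminus_eq ι k k' hk1 (by rw [hi, hk2]) (by rw [hi]; omega)
    have hval : Valid n (Function.update g i (g i - 1)) :=
      hg.upd i hi1 _ (by omega) (by intro h; rcases hb with h' | h' <;> omega)
    refine ⟨_, hval, ?_⟩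
    have key := Fm_move n hn ι hadm w A hA had s (Function.update g i (g i - 1)) k' hk1 i hk2
      (by rw [Function.update_self, Function.update_of_ne (by omega)]; omega)
      (by
        rw [Function.update_self, Function.update_of_ne (by omega)]
        rcases hb with h' | h'
        · exact Or.inl h'
        · right; omega)
      (by rw [hk3]; unfold qf; rw [Function.update_self]; ring)
    have hgg : Function.update (Function.update g i (g i - 1)) i
        (Function.update g i (g i - 1) i + 1) = g := by
      simp
    have hcf : cf n w (Function.update g i (g i - 1)) i = - cf n w g i := by
      unfold cf
      rw [Function.update_self, Function.update_of_ne (show i - 1 ≠ i by omega),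
        Function.update_of_ne (show i + 1 ≠ i by omega)]
      split_ifs with h
      · omega
      · rcases hb with h' | h'
        · exact absurd h' h
        · rw [h', ha]; ring
    rw [hgg, hcf] at key
    have hnn : ¬ (0 < Fm ι n w s g k) := by
      rw [hv]; push Not; exact_mod_cast hneg.le
    rw [Sop, if_neg hnn, hkm, hv]
    nth_rewrite 1 [key]
    funext l
    simp
  · have hg1 : g i = g (i - 1) ∧ (i = n ∨ g (i + 1) = g i + 1) := by
      unfold cf at hpos
      split_ifs at hpos with h
      · exact ⟨by omega, Or.inl h⟩
      · have h2 := hg.step i (by omega)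
        have := (mul_pos_iff_of_pos_left hw).mp hpos
        exact ⟨by omega, Or.inr (by omega)⟩
    obtain ⟨ha, hb⟩ := hg1
    refine ⟨_, hg.upd i hi1 (g i + 1) (by omega) (by intro h; rcases hb with h' | h' <;> omega), ?_⟩
    rw [Fm_move n hn ι hadm w A hA had s g k hk i hi ha hb hq]
    have hp : 0 < Fm ι n w s g k := by rw [hv]; exact_mod_cast hpos
    rw [Sop, if_pos hp, hv]

theorem xsj_apply (n : ℕ) (ι : ℕ → ℕ) (hadm : Admissible n ι) (q : ℤ) (t : ℕ) (ht : t ≤ n)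
    (k : ℕ) (hk : 1 ≤ k) :
    xsj ι n q t k = if ι k = t ∧ (cntL ι (ι k) k : ℤ) = q then 1 else 0 := by
  have hkp := cntL_pos ι hk
  have hi := hadm.1 k hk
  unfold xsj
  by_cases h : 1 ≤ q ∧ 1 ≤ t ∧ t ≤ n
  · rw [if_pos h]
    obtain ⟨m, rfl⟩ : ∃ m : ℕ, q = (m : ℤ) + 1 := ⟨(q - 1).toNat, by omega⟩
    have hm : ((m : ℤ) + 1).toNat = m + 1 := by omega
    have sp := occPos_spec ι t (hadm.2.2 t h.2.1 h.2.2) m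
    rw [hm, xc]
    congr 1
    apply propext
    constructor
    · intro e; rw [e, sp.2.1, sp.2.2]; simp
    · rintro ⟨e1, e2⟩
      rw [e1] at e2
      exact cntL_inj ι t e1 sp.2.1 (by omega)
  · rw [if_neg h, if_neg]
    · rfl
    · rintro ⟨e1, e2⟩
      apply h; omega

theorem xsj_zero (n : ℕ) (ι : ℕ → ℕ) (hadm : Admissible n ι) (q : ℤ) (t : ℕ) :
    xsj ι n q t 0 = 0 := by
  unfold xsj
  split_ifs with h
  · obtain ⟨m, rfl⟩ : ∃ m : ℕ, q = (m : ℤ) + 1 := ⟨(q - 1).toNat, by omega⟩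
    have hm : ((m : ℤ) + 1).toNat = m + 1 := by omega
    have sp := occPos_spec ι t (hadm.2.2 t h.2.1 h.2.2) m
    rw [hm, xc, if_neg (by omega)]
  · rfl

theorem Fm_base (n : ℕ) (hn : 2 ≤ n) (ι : ℕ → ℕ) (hadm : Admissible n ι) (w : ℤ) (s : ℤ)
    (hs : 1 - (PABC ι n n : ℤ) ≤ s) (g : ℕ → ℤ) (hg : ∀ t, t ≤ n → g t = 0) :
    Fm ι n w s g = xc (occPos ι n (s + PABC ι n n).toNat) := by
  have : xc (occPos ι n (s + PABC ι n n).toNat) = xsj ι n (s + PABC ι n n) n := by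
    unfold xsj; rw [if_pos (by omega)]
  rw [this]
  funext k
  rcases Nat.eq_zero_or_pos k with rfl | hk
  · rw [xsj_zero n ι hadm]; simp [Fm]
  obtain ⟨hi1, hin⟩ := hadm.1 k hk
  rw [xsj_apply n ι hadm _ n le_rfl k hk]
  simp only [Fm, if_neg (show k ≠ 0 by omega)]
  by_cases h : ι k = n
  · have hq : qf ι n s g (ι k) = s + PABC ι n n := by
      unfold qf; rw [hg _ hin, h]; ring
    have hc : cf n w g (ι k) = 1 := by
      unfold cf; rw [if_pos h, hg _ hin, hg _ (by omega)]; rfl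
    rw [hq, hc]; simp [h]
  · have hc : cf n w g (ι k) = 0 := by
      unfold cf; rw [if_neg h, hg _ hin, hg _ (by omega), hg _ (by omega)]; simp
    rw [hc]; simp [h]

/-- Every form of the family is reachable. -/
theorem Fm_reach (n : ℕ) (hn : 2 ≤ n) (ι : ℕ → ℕ) (hadm : Admissible n ι) (w : ℤ)
    (A : ℕ → ℕ → ℤ) (hA : CartanW n w A) (had : Adapted n A ι) (s : ℤ)
    (hs : 1 - (PABC ι n n : ℤ) ≤ s) (m : ℕ) : ∀ (g : ℕ → ℤ), Valid n g →
    ∑ t ∈ Finset.Icc 1 n, g t = m →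
    XiMemFrom A ι { ψ | ∃ r, 1 ≤ r ∧ ψ = xc (occPos ι n r) } (Fm ι n w s g) := by
  induction m with
  | zero =>
    intro g hg hm
    apply XiMemFrom.base
    refine ⟨(s + PABC ι n n).toNat, by omega, Fm_base n hn ι hadm w s hs g ?_⟩
    intro t ht
    rcases Nat.eq_zero_or_pos t with rfl | h
    · exact hg.zero
    · have := (Finset.sum_eq_zero_iff_of_nonneg (s := Finset.Icc 1 n) (f := g)
        (fun i hi => hg.nonneg i (Finset.mem_Icc.mp hi).2)).mp (by simpa using hm)
      exact this t (Finset.mem_Icc.mpr ⟨h, ht⟩)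
  | succ m ih =>
    intro g hg hm
    -- the largest jump
    let S := (Finset.Icc 1 n).filter (fun t => g t = g (t - 1) + 1)
    have hS : S.Nonempty := by
      by_contra hne
      rw [Finset.not_nonempty_iff_eq_empty] at hne
      have hz : ∀ t, t ≤ n → g t = 0 := by
        intro t
        induction t with
        | zero => intro _; exact hg.zero
        | succ t iht =>
          intro ht
          have := iht (by omega)
          rcases hg.step t (by omega) with h | h
          · omega
          · have : t + 1 ∈ S := by simp [S, h]; omega
            rw [hne] at this; simp at this
      have : ∑ t ∈ Finset.Icc 1 n, g t = 0 :=
        Finset.sum_eq_zero fun t ht => hz t (Finset.mem_Icc.mp ht).2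
      rw [this] at hm; push_cast at hm; omega
    have hM := S.max'_mem hS
    have hmax : ∀ t ∈ S, t ≤ S.max' hS := fun t ht => S.le_max' t ht
    generalize S.max' hS = i at hM hmax
    simp only [S, Finset.mem_filter, Finset.mem_Icc] at hM
    obtain ⟨⟨hi1, hin⟩, hgi⟩ := hM
    have hb : i = n ∨ g (i + 1) = g i := by
      rcases hin.lt_or_eq with h | h
      · right
        rcases hg.step i h with h' | h'
        · exact h'
        · have := hmax (i + 1) (by simp [S, h']; omega)
          omega
      · exact Or.inl h
    have hval : Valid n (Function.update g i (g i - 1)) :=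
      hg.upd i hi1 _ (by omega) (by intro h; rcases hb with h' | h' <;> omega)
    have hsum : ∑ t ∈ Finset.Icc 1 n, Function.update g i (g i - 1) t = m := by
      have hmem : i ∈ Finset.Icc 1 n := Finset.mem_Icc.mpr ⟨hi1, hin⟩
      rw [Finset.sum_update_of_mem hmem]
      have := Finset.sum_eq_add_sum_sdiff_singleton_of_mem hmem g
      push_cast at hm
      omega
    have hr := ih _ hval hsum
    have hnn := hval.nonneg i hin
    have hqp := qf_pos ι n s (Function.update g i (g i - 1)) hs i hi1 hin
    obtain ⟨k', hk1, hk2, hk3⟩ := exists_pos n ι hadm i hi1 hin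
      (qf ι n s (Function.update g i (g i - 1)) i) (by omega)
    have key := Fm_move n hn ι hadm w A hA had s (Function.update g i (g i - 1)) k' hk1 i hk2
      (by rw [Function.update_self, Function.update_of_ne (by omega)]; omega)
      (by
        rw [Function.update_self, Function.update_of_ne (by omega)]
        rcases hb with h' | h'
        · exact Or.inl h'
        · right; omega) hk3
    have hgg : Function.update (Function.update g i (g i - 1)) i
        (Function.update g i (g i - 1) i + 1) = g := by
      simp
    have hcf : 0 < cf n w (Function.update g i (g i - 1)) i := by
      have hw := hA.wpos
      unfold cf
      rw [Function.update_self, Function.update_of_ne (show i - 1 ≠ i by omega),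
        Function.update_of_ne (show i + 1 ≠ i by omega)]
      split_ifs with h
      · omega
      · rcases hb with h' | h'
        · exact absurd h' h
        · exact mul_pos hw (by omega)
    have hv : Fm ι n w s (Function.update g i (g i - 1)) k' =
        (cf n w (Function.update g i (g i - 1)) i : ℚ) := by
      simp [Fm, hk2, hk3, show k' ≠ 0 by omega]
    rw [hgg] at key
    have hp : 0 < Fm ι n w s (Function.update g i (g i - 1)) k' := by
      rw [hv]; exact_mod_cast hcf
    have := XiMemFrom.step (A := A) k' hk1 _ hr
    rw [Sop, if_pos hp, hv, ← key] at this
    exact this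

theorem Xi_iff (n : ℕ) (hn : 2 ≤ n) (ι : ℕ → ℕ) (hadm : Admissible n ι) (w : ℤ)
    (A : ℕ → ℕ → ℤ) (hA : CartanW n w A) (had : Adapted n A ι) (φ : ℕ → ℚ) :
    XiMemFrom A ι { ψ | ∃ r, 1 ≤ r ∧ ψ = xc (occPos ι n r) } φ ↔
    ∃ s g, 1 - (PABC ι n n : ℤ) ≤ s ∧ Valid n g ∧ φ = Fm ι n w s g := by
  constructor
  · intro h
    induction h with
    | base φ h =>
      obtain ⟨r, hr, rfl⟩ := h
      refine ⟨r - PABC ι n n, fun _ => 0, by omega, ⟨rfl, fun _ _ => Or.inl rfl⟩, ?_⟩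
      rw [Fm_base n hn ι hadm w _ (by omega) _ (fun _ _ => rfl)]
      congr 2
      omega
    | step k hk φ h ih =>
      obtain ⟨s, g, hs, hg, rfl⟩ := ih
      obtain ⟨g', hg', e⟩ := Fm_closed n hn ι hadm w A hA had s hs g hg k hk
      exact ⟨s, g', hs, hg', e⟩
  · rintro ⟨s, g, hs, hg, rfl⟩
    apply Fm_reach n hn ι hadm w A hA had s hs (∑ t ∈ Finset.Icc 1 n, g t).toNat g hg
    rw [Int.toNat_of_nonneg]
    exact Finset.sum_nonneg fun t ht => hg.nonneg t (Finset.mem_Icc.mp ht).2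

/-- Height function of a finite set. -/
def gT (T : Finset ℕ) (t : ℕ) : ℤ := ((T.filter (· ≤ t)).card : ℤ)

theorem gT_succ (T : Finset ℕ) (t : ℕ) :
    gT T (t + 1) = gT T t + if t + 1 ∈ T then 1 else 0 := by
  unfold gT
  split_ifs with h
  · have : T.filter (· ≤ t + 1) = insert (t + 1) (T.filter (· ≤ t)) := by
      ext x; simp only [Finset.mem_filter, Finset.mem_insert]
      constructor
      · rintro ⟨a, b⟩
        by_cases hx : x = t + 1
        · exact Or.inl hx
        · exact Or.inr ⟨a, by omega⟩
      · rintro (rfl | ⟨a, b⟩)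
        · exact ⟨h, le_rfl⟩
        · exact ⟨a, by omega⟩
    rw [this, Finset.card_insert_of_notMem (by simp)]
    push_cast; rfl
  · have : T.filter (· ≤ t + 1) = T.filter (· ≤ t) := by
      ext x; simp only [Finset.mem_filter]
      constructor
      · rintro ⟨a, b⟩
        refine ⟨a, ?_⟩
        by_contra hc
        exact h (by rwa [show t + 1 = x by omega])
      · rintro ⟨a, b⟩; exact ⟨a, by omega⟩
    rw [this]; simp

theorem gT_pred (T : Finset ℕ) (t : ℕ) (ht : 1 ≤ t) :
    gT T t = gT T (t - 1) + if t ∈ T then 1 else 0 := by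
  have := gT_succ T (t - 1)
  rwa [Nat.sub_add_cancel ht] at this

theorem gT_zero (n : ℕ) (T : Finset ℕ) (hT : T ⊆ Finset.Icc 1 n) : gT T 0 = 0 := by
  unfold gT
  rw [Finset.filter_false_of_mem]
  · rfl
  · intro x hx; have := Finset.mem_Icc.mp (hT hx); omega

theorem gT_top (n : ℕ) (T : Finset ℕ) (hT : T ⊆ Finset.Icc 1 n) : gT T n = T.card := by
  unfold gT
  rw [Finset.filter_true_of_mem]
  intro x hx; have := Finset.mem_Icc.mp (hT hx); omega

theorem gT_valid (n : ℕ) (T : Finset ℕ) (hT : T ⊆ Finset.Icc 1 n) : Valid n (gT T) := by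
  refine ⟨gT_zero n T hT, fun t _ => ?_⟩
  rw [gT_succ]; split_ifs <;> simp

theorem Fm_congr (n : ℕ) (ι : ℕ → ℕ) (hadm : Admissible n ι) (w s : ℤ) (g g' : ℕ → ℤ)
    (h : ∀ t, t ≤ n → g t = g' t) : Fm ι n w s g = Fm ι n w s g' := by
  funext k
  rcases Nat.eq_zero_or_pos k with rfl | hk
  · simp [Fm]
  obtain ⟨hi1, hin⟩ := hadm.1 k hk
  have hq : qf ι n s g (ι k) = qf ι n s g' (ι k) := by unfold qf; rw [h _ hin]
  have hc : cf n w g (ι k) = cf n w g' (ι k) := by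
    unfold cf
    split_ifs with h'
    · rw [h _ hin, h _ (by omega)]
    · rw [h _ hin, h _ (by omega), h _ (by omega)]
  simp only [Fm, hq, hc]

theorem exists_T (n : ℕ) (g : ℕ → ℤ) (hg : Valid n g) :
    ∃ T ⊆ Finset.Icc 1 n, ∀ t, t ≤ n → g t = gT T t := by
  refine ⟨(Finset.Icc 1 n).filter (fun t => g t = g (t - 1) + 1), Finset.filter_subset _ _, ?_⟩
  intro t
  induction t with
  | zero => intro _; rw [hg.zero, gT_zero n _ (Finset.filter_subset _ _)]
  | succ t ih =>
    intro ht
    rw [gT_succ, ← ih (by omega)]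
    rcases hg.step t (by omega) with h | h
    · rw [if_neg]
      · omega
      · simp; omega
    · rw [if_pos]
      · exact h
      · simp; omega

theorem sum_reindex (box : ℤ → ℕ → ℕ → ℚ) (s : ℤ) (a b : ℕ) (f : ℕ → ℕ)
    (hf : ∀ i, a ≤ i → i < b → f i < f (i + 1)) :
    ((Finset.Icc a b).image f).card = b + 1 - a ∧
    ∑ i ∈ Finset.Icc a b, box (s + b - i) (f i) =
      ∑ u ∈ (Finset.Icc a b).image f,
        box (s + (((Finset.Icc a b).image f).filter (u < ·)).card) u := by
  have hlt : ∀ i j, a ≤ i → i < j → j ≤ b → f i < f j := by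
    intro i j hi hij
    induction j, hij using Nat.le_induction with
    | base => intro h; exact hf i hi (by omega)
    | succ j hj ih =>
      intro h
      exact (ih (by omega)).trans (hf j (by omega) (by omega))
  have hinj : Set.InjOn f (Finset.Icc a b : Finset ℕ) := by
    intro i hi j hj h
    simp only [Finset.coe_Icc, Set.mem_Icc] at hi hj
    rcases lt_trichotomy i j with h1 | h1 | h1
    · have := hlt i j hi.1 h1 hj.2; omega
    · exact h1
    · have := hlt j i hj.1 h1 hi.2; omega
  refine ⟨by rw [Finset.card_image_of_injOn hinj, Nat.card_Icc], ?_⟩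
  rw [Finset.sum_image hinj]
  refine Finset.sum_congr rfl fun i hi => ?_
  rw [Finset.mem_Icc] at hi
  have e : ((Finset.Icc a b).image f).filter (f i < ·) = (Finset.Ioc i b).image f := by
    ext x
    simp only [Finset.mem_filter, Finset.mem_image, Finset.mem_Icc, Finset.mem_Ioc]
    constructor
    · rintro ⟨⟨j, hj, rfl⟩, h⟩
      refine ⟨j, ⟨?_, hj.2⟩, rfl⟩
      by_contra hc
      rcases (not_lt.mp hc).lt_or_eq with h1 | h1
      · have := hlt j i hj.1 h1 hi.2; omega
      · subst h1; omega
    · rintro ⟨j, hj, rfl⟩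
      exact ⟨⟨j, ⟨by omega, hj.2⟩, rfl⟩, hlt i j hi.1 hj.1 hj.2⟩
  have hc : ((Finset.Ioc i b).image f).card = b - i := by
    rw [Finset.card_image_of_injOn, Nat.card_Ioc]
    refine hinj.mono ?_
    intro x hx
    simp only [Finset.coe_Ioc, Set.mem_Ioc, Finset.coe_Icc, Set.mem_Icc] at *
    omega
  rw [e, hc]
  congr 1
  omega

theorem exists_enum (U : Finset ℕ) (a : ℕ) :
    ∃ f : ℕ → ℕ, (∀ i, a ≤ i → i + 1 < a + U.card → f i < f (i + 1)) ∧
      (Finset.Ico a (a + U.card)).image f = U := by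
  have hfin : {x | x ∈ U}.Finite := U.finite_toSet
  have hcard : hfin.toFinset = U := by ext x; simp
  refine ⟨fun i => Nat.nth (· ∈ U) (i - a), ?_, ?_⟩
  · intro i h1 h2
    apply Nat.nth_lt_nth_of_lt_card hfin (by omega)
    rw [hcard]; omega
  · apply Finset.eq_of_subset_of_card_le
    · intro x hx
      simp only [Finset.mem_image, Finset.mem_Ico] at hx
      obtain ⟨i, hi, rfl⟩ := hx
      exact Nat.nth_mem_of_lt_card hfin (by rw [hcard]; omega)
    · rw [Finset.card_image_of_injOn, Nat.card_Ico]
      · omega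
      · intro i hi j hj h
        simp only [Finset.coe_Ico, Set.mem_Ico] at hi hj
        have := Nat.nth_injOn hfin (x₁ := i - a) (x₂ := j - a)
          (by simp only [Set.mem_Iio]; rw [hcard]; omega)
          (by simp only [Set.mem_Iio]; rw [hcard]; omega) h
        omega

/-- The signed entry with absolute value `t`. -/
def sg (n : ℕ) (T : Finset ℕ) (t : ℕ) : ℕ := if t ∈ T then 2 * n + 1 - t else t

theorem sg_inj (n : ℕ) (T : Finset ℕ) : Set.InjOn (sg n T) (Finset.Icc 1 n : Finset ℕ) := by
  intro i hi j hj h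
  simp only [Finset.coe_Icc, Set.mem_Icc] at hi hj
  unfold sg at h
  split_ifs at h <;> omega

theorem sg_count (n : ℕ) (T : Finset ℕ) (hT : T ⊆ Finset.Icc 1 n) (t : ℕ) (h1 : 1 ≤ t)
    (h2 : t ≤ n) :
    (((((Finset.Icc 1 n).image (sg n T)).filter (sg n T t < ·)).card : ℕ) : ℤ) =
      if t ∈ T then gT T (t - 1) else gT T t + n - t := by
  rw [Finset.filter_image, Finset.card_image_of_injOn
    ((sg_inj n T).mono (by intro x hx; exact Finset.mem_of_mem_filter x hx))]
  split_ifs with h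
  · unfold gT
    congr 2
    ext r
    simp only [Finset.mem_filter, Finset.mem_Icc, sg, if_pos h]
    constructor
    · rintro ⟨a, b⟩
      split_ifs at b with hr
      · exact ⟨hr, by omega⟩
      · omega
    · rintro ⟨a, b⟩
      have := Finset.mem_Icc.mp (hT a)
      rw [if_pos a]; omega
  · have e : (Finset.Icc 1 n).filter (fun r => sg n T t < sg n T r) =
        (T.filter (· ≤ t)) ∪ Finset.Ioc t n := by
      ext r
      simp only [Finset.mem_filter, Finset.mem_Icc, sg, if_neg h, Finset.mem_union,
        Finset.mem_Ioc]
      constructor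
      · rintro ⟨a, b⟩
        split_ifs at b with hr
        · by_cases hh : r ≤ t
          · exact Or.inl ⟨hr, hh⟩
          · right; omega
        · right; omega
      · rintro (⟨a, b⟩ | a)
        · have := Finset.mem_Icc.mp (hT a)
          rw [if_pos a]; omega
        · refine ⟨by omega, ?_⟩
          split_ifs <;> omega
    rw [e, Finset.card_union_of_disjoint, Nat.card_Ioc]
    · unfold gT; push_cast [h2]; ring
    · rw [Finset.disjoint_left]
      intro x hx hy
      simp only [Finset.mem_filter, Finset.mem_Ioc] at hx hy
      omega

theorem sumB (n : ℕ) (hn : 2 ≤ n) (ι : ℕ → ℕ) (hadm : Admissible n ι) (s : ℤ) (T : Finset ℕ)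
    (hT : T ⊆ Finset.Icc 1 n) :
    ∑ u ∈ (Finset.Icc 1 n).image (sg n T),
      boxB ι n (s + (((Finset.Icc 1 n).image (sg n T)).filter (u < ·)).card) u =
    Fm ι n 2 s (gT T) := by
  rw [Finset.sum_image (sg_inj n T)]
  have hbox : ∀ t ∈ Finset.Icc 1 n,
      boxB ι n (s + (((Finset.Icc 1 n).image (sg n T)).filter (sg n T t < ·)).card) (sg n T t) =
      (if t ∈ T then (-1 : ℚ) else 1) • (xsj ι n (qf ι n s (gT T) t) t -
        xsj ι n (qf ι n s (gT T) (t - 1)) (t - 1)) := by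
    intro t ht
    obtain ⟨h1, h2⟩ := Finset.mem_Icc.mp ht
    rw [sg_count n T hT t h1 h2]
    have hp := gT_pred T t h1
    by_cases h : t ∈ T
    · simp only [h, if_true, sg, boxB] at hp ⊢
      rw [if_neg (show ¬ (2 * n + 1 - t ≤ n) by omega),
        show 2 * n - (2 * n + 1 - t) = t - 1 by omega,
        show 2 * n + 1 - (2 * n + 1 - t) = t by omega, neg_one_smul, neg_sub]
      congr 2
      · unfold qf; push_cast [h1]; ring
      · unfold qf; rw [hp]; ring
    · simp only [h, if_false, sg, boxB] at hp ⊢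
      rw [if_pos h2, one_smul]
      congr 2
      · unfold qf; ring
      · unfold qf; rw [hp]; push_cast [h1]; ring
  rw [Finset.sum_congr rfl hbox]
  funext k
  rcases Nat.eq_zero_or_pos k with rfl | hk
  · rw [Finset.sum_apply, Finset.sum_eq_zero]
    · simp [Fm]
    · intro t _
      rw [Pi.smul_apply, Pi.sub_apply, xsj_zero n ι hadm, xsj_zero n ι hadm]; simp
  obtain ⟨hi1, hin⟩ := hadm.1 k hk
  have hpt : ∀ t ∈ Finset.Icc 1 n,
      ((if t ∈ T then (-1 : ℚ) else 1) • (xsj ι n (qf ι n s (gT T) t) t -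
        xsj ι n (qf ι n s (gT T) (t - 1)) (t - 1))) k =
      (if ι k = t then (if t ∈ T then (-1 : ℚ) else 1) *
          (if (cntL ι (ι k) k : ℤ) = qf ι n s (gT T) (ι k) then 1 else 0) else 0)
      - (if ι k + 1 = t then (if t ∈ T then (-1 : ℚ) else 1) *
          (if (cntL ι (ι k) k : ℤ) = qf ι n s (gT T) (ι k) then 1 else 0) else 0) := by
    intro t ht
    obtain ⟨h1, h2⟩ := Finset.mem_Icc.mp ht
    rw [Pi.smul_apply, Pi.sub_apply, xsj_apply n ι hadm _ t h2 k hk,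
      xsj_apply n ι hadm _ (t - 1) (by omega) k hk, smul_eq_mul, mul_sub]
    congr 1
    · by_cases h : ι k = t
      · subst h; simp
      · simp [h]
    · by_cases h : ι k + 1 = t
      · subst h; simp
      · have hne : ¬ (ι k = t - 1 ∧ (cntL ι (ι k) k : ℤ) = qf ι n s (gT T) (t - 1)) :=
          fun h' => h (by omega)
        rw [if_neg hne, if_neg h, mul_zero]
  rw [Finset.sum_apply, Finset.sum_congr rfl hpt, Finset.sum_sub_distrib, Finset.sum_ite_eq,
    Finset.sum_ite_eq, if_pos (Finset.mem_Icc.mpr ⟨hi1, hin⟩)]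
  simp only [Fm, if_neg (show k ≠ 0 by omega)]
  by_cases hN : (cntL ι (ι k) k : ℤ) = qf ι n s (gT T) (ι k)
  · have a1 := gT_pred T (ι k) hi1
    have a2 := gT_succ T (ι k)
    rw [if_pos hN, if_pos hN]
    unfold cf
    by_cases hi : ι k = n
    · have hne : ι k + 1 ∉ Finset.Icc 1 n := by rw [Finset.mem_Icc]; omega
      rw [if_pos hi, if_neg hne, a1]
      split_ifs <;> norm_num
    · have hne : ι k + 1 ∈ Finset.Icc 1 n := by rw [Finset.mem_Icc]; omega
      rw [if_neg hi, if_pos hne, a2, a1]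
      split_ifs <;> push_cast <;> ring
  · simp [hN]

theorem sumC (n : ℕ) (hn : 2 ≤ n) (ι : ℕ → ℕ) (hadm : Admissible n ι) (s : ℤ) (T : Finset ℕ)
    (hT : T ⊆ Finset.Icc 1 n) :
    boxC ι n (s + T.card) 0 + ∑ u ∈ T.image (fun t => 2 * n + 1 - t),
      boxC ι n (s + ((T.image (fun t => 2 * n + 1 - t)).filter (u < ·)).card) u =
    Fm ι n 1 s (gT T) := by
  have hmem : ∀ t ∈ T, 1 ≤ t ∧ t ≤ n := fun t ht => Finset.mem_Icc.mp (hT ht)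
  have hinj : Set.InjOn (fun t => 2 * n + 1 - t) (T : Set ℕ) := by
    intro i hi j hj h
    have := hmem i hi
    have := hmem j hj
    simp only at h
    omega
  rw [Finset.sum_image hinj]
  have hbox : ∀ t ∈ T,
      boxC ι n (s + ((T.image (fun t => 2 * n + 1 - t)).filter (2 * n + 1 - t < ·)).card)
        (2 * n + 1 - t) =
      xsj ι n (qf ι n s (gT T) (t - 1)) (t - 1) -
      (if t = n then (2 : ℚ) else 1) • xsj ι n (qf ι n s (gT T) t) t := by
    intro t ht
    obtain ⟨h1, h2⟩ := hmem t ht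
    have hp := gT_pred T t h1
    have hc : (((T.image (fun t => 2 * n + 1 - t)).filter (2 * n + 1 - t < ·)).card : ℤ)
        = gT T (t - 1) := by
      rw [Finset.filter_image, Finset.card_image_of_injOn
        (hinj.mono (by intro x hx; exact Finset.mem_of_mem_filter x hx))]
      unfold gT
      congr 2
      ext r
      simp only [Finset.mem_filter]
      constructor
      · rintro ⟨a, b⟩; have := hmem r a; exact ⟨a, by omega⟩
      · rintro ⟨a, b⟩; have := hmem r a; exact ⟨a, by omega⟩
    rw [hc]
    simp only [ht, if_true] at hp
    unfold boxC
    rw [if_neg (by omega), if_neg (by omega), if_neg (by omega)]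
    by_cases h : t = n
    · subst h
      rw [if_pos (by omega), if_pos rfl]
      have e1 : s + gT T (t - 1) + (PABC ι t (t - 1) : ℤ) + 1 = qf ι t s (gT T) (t - 1) := by
        unfold qf; push_cast [h1]; ring
      have e2 : s + gT T (t - 1) + (PABC ι t t : ℤ) + 1 = qf ι t s (gT T) t := by
        unfold qf; rw [hp]; ring
      rw [e1, e2]
    · rw [if_neg (by omega), if_neg h, one_smul,
        show 2 * n - (2 * n + 1 - t) = t - 1 by omega,
        show 2 * n + 1 - (2 * n + 1 - t) = t by omega]
      congr 2
      · unfold qf; push_cast [h1]; ring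
      · unfold qf; rw [hp]; ring
  rw [Finset.sum_congr rfl hbox]
  have h0 : boxC ι n (s + T.card) 0 = xsj ι n (qf ι n s (gT T) n) n := by
    unfold boxC qf
    rw [if_pos rfl, gT_top n T hT]
    congr 1; ring
  rw [h0]
  funext k
  rcases Nat.eq_zero_or_pos k with rfl | hk
  · rw [Pi.add_apply, Finset.sum_apply, Finset.sum_eq_zero, xsj_zero n ι hadm]
    · simp [Fm]
    · intro t _
      rw [Pi.sub_apply, Pi.smul_apply, xsj_zero n ι hadm, xsj_zero n ι hadm]; simp
  obtain ⟨hi1, hin⟩ := hadm.1 k hk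
  have hpt : ∀ t ∈ T,
      (xsj ι n (qf ι n s (gT T) (t - 1)) (t - 1) -
      (if t = n then (2 : ℚ) else 1) • xsj ι n (qf ι n s (gT T) t) t) k =
      (if ι k + 1 = t then
          (if (cntL ι (ι k) k : ℤ) = qf ι n s (gT T) (ι k) then (1 : ℚ) else 0) else 0)
      - (if ι k = t then (if t = n then (2 : ℚ) else 1) *
          (if (cntL ι (ι k) k : ℤ) = qf ι n s (gT T) (ι k) then 1 else 0) else 0) := by
    intro t ht
    obtain ⟨h1, h2⟩ := hmem t ht
    rw [Pi.sub_apply, Pi.smul_apply, xsj_apply n ι hadm _ t h2 k hk,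
      xsj_apply n ι hadm _ (t - 1) (by omega) k hk, smul_eq_mul]
    congr 1
    · by_cases h : ι k + 1 = t
      · subst h; simp
      · rw [if_neg (fun h' => h (by omega)), if_neg h]
    · by_cases h : ι k = t
      · subst h; simp
      · simp [h]
  rw [Pi.add_apply, Finset.sum_apply, Finset.sum_congr rfl hpt, Finset.sum_sub_distrib,
    Finset.sum_ite_eq, Finset.sum_ite_eq, xsj_apply n ι hadm _ n le_rfl k hk]
  simp only [Fm, if_neg (show k ≠ 0 by omega)]
  by_cases hN : (cntL ι (ι k) k : ℤ) = qf ι n s (gT T) (ι k)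
  · have a1 := gT_pred T (ι k) hi1
    have a2 := gT_succ T (ι k)
    rw [if_pos hN, if_pos hN]
    unfold cf
    by_cases hi : ι k = n
    · have : ι k + 1 ∉ T := fun h => by have := hmem _ h; omega
      rw [← hi] at hN ⊢
      rw [if_neg this, if_pos ⟨rfl, hN⟩, if_pos rfl, if_pos rfl, a1]
      split_ifs <;> norm_num
    · rw [if_neg hi, if_neg (fun h => hi h.1), a2, a1, if_neg hi]
      split_ifs <;> push_cast <;> ring
  · have hne : ¬ (ι k = n ∧ (cntL ι (ι k) k : ℤ) = qf ι n s (gT T) n) := by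
      rintro ⟨h1, h2⟩; rw [h1] at hN; rw [h1] at h2; exact hN h2
    rw [if_neg hne]
    simp [hN]

/-- Type B, tableaux versus forms. -/
theorem tabB_iff (n : ℕ) (hn : 2 ≤ n) (ι : ℕ → ℕ) (hadm : Admissible n ι) (s : ℤ) (φ : ℕ → ℚ) :
    (∃ g, Valid n g ∧ φ = Fm ι n 2 s g) ↔ ∃ (j : ℕ → ℕ),
          (∀ i, 1 ≤ i → i ≤ n → 1 ≤ j i ∧ j i ≤ 2 * n) ∧
          (∀ i, 1 ≤ i → i < n → j i < j (i + 1)) ∧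
          (∀ l m, 1 ≤ l → l < m → m ≤ n → absJ n (j l) ≠ absJ n (j m)) ∧
          φ = tab (boxB ι n) s n j := by
  constructor
  · rintro ⟨g, hg, rfl⟩
    obtain ⟨T, hT, hgT⟩ := exists_T n g hg
    rw [Fm_congr n ι hadm 2 s g (gT T) hgT, ← sumB n hn ι hadm s T hT]
    have hcard : ((Finset.Icc 1 n).image (sg n T)).card = n := by
      rw [Finset.card_image_of_injOn (sg_inj n T), Nat.card_Icc]; rfl
    obtain ⟨f, hf, himg⟩ := exists_enum ((Finset.Icc 1 n).image (sg n T)) 1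
    rw [hcard] at hf himg
    have hII : Finset.Ico 1 (1 + n) = Finset.Icc 1 n := by
      ext x; simp only [Finset.mem_Ico, Finset.mem_Icc]; omega
    rw [hII] at himg
    have hmem : ∀ i, 1 ≤ i → i ≤ n → ∃ t, (1 ≤ t ∧ t ≤ n) ∧ sg n T t = f i := by
      intro i h1 h2
      have : f i ∈ (Finset.Icc 1 n).image (sg n T) := by
        rw [← himg]; exact Finset.mem_image_of_mem f (Finset.mem_Icc.mpr ⟨h1, h2⟩)
      simpa only [Finset.mem_image, Finset.mem_Icc] using this
    have habs : ∀ t, 1 ≤ t → t ≤ n → absJ n (sg n T t) = t := by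
      intro t h1 h2
      unfold absJ sg; split_ifs <;> omega
    have hf' : ∀ i, 1 ≤ i → i < n → f i < f (i + 1) := fun i h1 h2 => hf i h1 (by omega)
    obtain ⟨hc, hs⟩ := sum_reindex (boxB ι n) s 1 n f hf'
    refine ⟨f, ?_, hf', ?_, ?_⟩
    · intro i h1 h2
      obtain ⟨t, ht, e⟩ := hmem i h1 h2
      rw [← e]; unfold sg; split_ifs <;> omega
    · intro l m h1 h2 h3 h4
      obtain ⟨t, ht, e⟩ := hmem l h1 (by omega)
      obtain ⟨t', ht', e'⟩ := hmem m (by omega) h3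
      rw [← e, ← e', habs t ht.1 ht.2, habs t' ht'.1 ht'.2] at h4
      rw [h4] at e
      have hinj : Set.InjOn f (Finset.Icc 1 n : Finset ℕ) := by
        rw [← Finset.card_image_iff, hc, Nat.card_Icc]
      have := hinj (by simp; omega) (by simp; omega) (e.symm.trans e')
      omega
    · unfold tab; rw [hs, himg]
  · rintro ⟨j, h1, h2, h3, rfl⟩
    obtain ⟨hc, hs⟩ := sum_reindex (boxB ι n) s 1 n j h2
    let T := (Finset.Icc 1 n).filter (fun t => 2 * n + 1 - t ∈ (Finset.Icc 1 n).image j)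
    have hT : T ⊆ Finset.Icc 1 n := Finset.filter_subset _ _
    have hU : (Finset.Icc 1 n).image j = (Finset.Icc 1 n).image (sg n T) := by
      apply Finset.eq_of_subset_of_card_le
      · intro x hx
        have hx' := hx
        simp only [Finset.mem_image, Finset.mem_Icc] at hx'
        obtain ⟨i, hi, rfl⟩ := hx'
        have hb := h1 i hi.1 hi.2
        rw [Finset.mem_image]
        by_cases hle : j i ≤ n
        · refine ⟨j i, Finset.mem_Icc.mpr ⟨hb.1, hle⟩, ?_⟩
          unfold sg
          rw [if_neg]
          intro hmem
          have := (Finset.mem_filter.mp hmem).2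
          simp only [Finset.mem_image, Finset.mem_Icc] at this
          obtain ⟨i', hi', e⟩ := this
          have habs : absJ n (j i) = absJ n (j i') := by
            unfold absJ; rw [e]; split_ifs <;> omega
          rcases lt_trichotomy i i' with h | h | h
          · exact h3 i i' hi.1 h hi'.2 habs
          · subst h; omega
          · exact h3 i' i hi'.1 h hi.2 habs.symm
        · refine ⟨2 * n + 1 - j i, Finset.mem_Icc.mpr ⟨by omega, by omega⟩, ?_⟩
          unfold sg
          rw [if_pos]
          · omega
          · refine Finset.mem_filter.mpr ⟨Finset.mem_Icc.mpr ⟨by omega, by omega⟩, ?_⟩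
            rw [show 2 * n + 1 - (2 * n + 1 - j i) = j i by omega]
            exact hx
      · rw [hc, Finset.card_image_of_injOn (sg_inj n T), Nat.card_Icc]
    refine ⟨gT T, gT_valid n T hT, ?_⟩
    rw [← sumB n hn ι hadm s T hT, ← hU, ← hs]
    rfl

/-- Type C, tableaux versus forms. -/
theorem tabC_iff (n : ℕ) (hn : 2 ≤ n) (ι : ℕ → ℕ) (hadm : Admissible n ι) (s : ℤ) (φ : ℕ → ℚ) :
    (∃ g, Valid n g ∧ φ = Fm ι n 1 s g) ↔ ∃ (k : ℕ) (j : ℕ → ℕ),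
          j 1 = 0 ∧ 1 ≤ k ∧ k ≤ n + 1 ∧
          (∀ i, 2 ≤ i → i ≤ k → n + 1 ≤ j i ∧ j i ≤ 2 * n) ∧
          (∀ i, 2 ≤ i → i < k → j i < j (i + 1)) ∧
          φ = tab (boxC ι n) s k j := by
  have hsplit : ∀ k (j : ℕ → ℕ), 1 ≤ k → tab (boxC ι n) s k j =
      boxC ι n (s + k - 1) (j 1) + ∑ i ∈ Finset.Icc 2 k, boxC ι n (s + k - i) (j i) := by
    intro k j hk
    unfold tab
    rw [← Finset.add_sum_Ioc_eq_sum_Icc hk]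
    rfl
  constructor
  · rintro ⟨g, hg, rfl⟩
    obtain ⟨T, hT, hgT⟩ := exists_T n g hg
    rw [Fm_congr n ι hadm 1 s g (gT T) hgT, ← sumC n hn ι hadm s T hT]
    have hmT : ∀ t ∈ T, 1 ≤ t ∧ t ≤ n := fun t ht => Finset.mem_Icc.mp (hT ht)
    have hTn : T.card ≤ n := by simpa using Finset.card_le_card hT
    have hcard : (T.image (fun t => 2 * n + 1 - t)).card = T.card := by
      apply Finset.card_image_of_injOn
      intro i hi j hj h
      have := hmT i hi
      have := hmT j hj
      simp only at h
      omega
    obtain ⟨f, hf, himg⟩ := exists_enum (T.image (fun t => 2 * n + 1 - t)) 2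
    rw [hcard] at hf himg
    have hII : Finset.Ico 2 (2 + T.card) = Finset.Icc 2 (T.card + 1) := by
      ext x; simp only [Finset.mem_Ico, Finset.mem_Icc]; omega
    rw [hII] at himg
    let f' : ℕ → ℕ := fun i => if i = 1 then 0 else f i
    have hf' : ∀ i, 2 ≤ i → i < T.card + 1 → f' i < f' (i + 1) := by
      intro i h1 h2
      simp only [f', if_neg (show i ≠ 1 by omega), if_neg (show i + 1 ≠ 1 by omega)]
      exact hf i h1 (by omega)
    have himg' : (Finset.Icc 2 (T.card + 1)).image f' = T.image (fun t => 2 * n + 1 - t) := by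
      rw [← himg]
      apply Finset.image_congr
      intro i hi
      simp only [Finset.coe_Icc, Set.mem_Icc] at hi
      simp only [f', if_neg (show i ≠ 1 by omega)]
    obtain ⟨hc, hs⟩ := sum_reindex (boxC ι n) s 2 (T.card + 1) f' hf'
    refine ⟨T.card + 1, f', by simp [f'], by omega, by omega, ?_, hf', ?_⟩
    · intro i h1 h2
      have : f' i ∈ T.image (fun t => 2 * n + 1 - t) := by
        rw [← himg']; exact Finset.mem_image_of_mem f' (Finset.mem_Icc.mpr ⟨h1, h2⟩)
      obtain ⟨t, ht, e⟩ := Finset.mem_image.mp this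
      have := hmT t ht
      omega
    · rw [hsplit _ _ (by omega), hs, himg']
      congr 2
      push_cast; ring
  · rintro ⟨k, j, h0, hk1, hk2, h1, h2, rfl⟩
    obtain ⟨hc, hs⟩ := sum_reindex (boxC ι n) s 2 k j h2
    have hmU : ∀ u ∈ (Finset.Icc 2 k).image j, n + 1 ≤ u ∧ u ≤ 2 * n := by
      intro u hu
      obtain ⟨i, hi, rfl⟩ := Finset.mem_image.mp hu
      have := Finset.mem_Icc.mp hi
      exact h1 i this.1 this.2
    let T := ((Finset.Icc 2 k).image j).image (fun u => 2 * n + 1 - u)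
    have hT : T ⊆ Finset.Icc 1 n := by
      intro t ht
      obtain ⟨u, hu, rfl⟩ := Finset.mem_image.mp ht
      have := hmU u hu
      simp only [Finset.mem_Icc]; omega
    have hTU : T.image (fun t => 2 * n + 1 - t) = (Finset.Icc 2 k).image j := by
      ext x
      simp only [T, Finset.mem_image (s := Finset.image _ _)]
      constructor
      · rintro ⟨t, ⟨u, hu, rfl⟩, rfl⟩
        have := hmU u hu
        rwa [show 2 * n + 1 - (2 * n + 1 - u) = u by omega]
      · intro hx
        have := hmU x hx
        exact ⟨2 * n + 1 - x, ⟨x, hx, rfl⟩, by omega⟩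
    have hTc : T.card = k - 1 := by
      have : T.card = ((Finset.Icc 2 k).image j).card := by
        apply Finset.card_image_of_injOn
        intro a ha b hb h
        have := hmU a ha
        have := hmU b hb
        simp only at h
        omega
      omega
    refine ⟨gT T, gT_valid n T hT, ?_⟩
    rw [← sumC n hn ι hadm s T hT, hTU, ← hs, hsplit k j hk1, h0, hTc]
    congr 2
    push_cast [hk1]; ring

theorem xi_from_xrn_BC (n : ℕ) (hn : 2 ≤ n) (ι : ℕ → ℕ) (hadm : Admissible n ι) :
    (Adapted n (cartanB n) ι →
      { φ : ℕ → ℚ |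
          XiMemFrom (cartanB n) ι { ψ | ∃ r, 1 ≤ r ∧ ψ = xc (occPos ι n r) } φ } =
      { T : ℕ → ℚ | ∃ (s : ℤ) (j : ℕ → ℕ),
          (∀ i, 1 ≤ i → i ≤ n → 1 ≤ j i ∧ j i ≤ 2 * n) ∧
          (∀ i, 1 ≤ i → i < n → j i < j (i + 1)) ∧
          (∀ l m, 1 ≤ l → l < m → m ≤ n → absJ n (j l) ≠ absJ n (j m)) ∧
          1 - (PABC ι n n : ℤ) ≤ s ∧
          T = tab (boxB ι n) s n j }) ∧
    (Adapted n (cartanC n) ι →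
      { φ : ℕ → ℚ |
          XiMemFrom (cartanC n) ι { ψ | ∃ r, 1 ≤ r ∧ ψ = xc (occPos ι n r) } φ } =
      { T : ℕ → ℚ | ∃ (k : ℕ) (s : ℤ) (j : ℕ → ℕ),
          j 1 = 0 ∧ 1 ≤ k ∧ k ≤ n + 1 ∧
          (∀ i, 2 ≤ i → i ≤ k → n + 1 ≤ j i ∧ j i ≤ 2 * n) ∧
          (∀ i, 2 ≤ i → i < k → j i < j (i + 1)) ∧
          1 - (PABC ι n n : ℤ) ≤ s ∧
          T = tab (boxC ι n) s k j }) := by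
  constructor
  · intro had
    ext φ
    rw [Set.mem_ofPred_eq, Set.mem_ofPred_eq,
      Xi_iff n hn ι hadm 2 (cartanB n) (cartanW_B n) had φ]
    constructor
    · rintro ⟨s, g, hs, hg, e⟩
      obtain ⟨j, a, b, c, d⟩ := (tabB_iff n hn ι hadm s φ).mp ⟨g, hg, e⟩
      exact ⟨s, j, a, b, c, hs, d⟩
    · rintro ⟨s, j, a, b, c, hs, d⟩
      obtain ⟨g, hg, e⟩ := (tabB_iff n hn ι hadm s φ).mpr ⟨j, a, b, c, d⟩
      exact ⟨s, g, hs, hg, e⟩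
  · intro had
    ext φ
    rw [Set.mem_ofPred_eq, Set.mem_ofPred_eq,
      Xi_iff n hn ι hadm 1 (cartanC n) (cartanW_C n) had φ]
    constructor
    · rintro ⟨s, g, hs, hg, e⟩
      obtain ⟨k, j, a, b, c, d, f, h⟩ := (tabC_iff n hn ι hadm s φ).mp ⟨g, hg, e⟩
      exact ⟨k, s, j, a, b, c, d, f, hs, h⟩
    · rintro ⟨k, s, j, a, b, c, d, f, hs, h⟩
      obtain ⟨g, hg, e⟩ := (tabC_iff n hn ι hadm s φ).mpr ⟨k, j, a, b, c, d, f, h⟩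
      exact ⟨s, g, hs, hg, e⟩
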